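/- Let n ≥ 1, let ρ, σ be n×n complex density matrices (Hermitian, positive semidefinite, trace 1), let S be the swap operator on ℂⁿ⊗ℂⁿ, and let 0 < Δt ≤ 1. Then, in the ℓ²→ℓ² operator norm, ‖ Tr₁[exp(−i Δt S)(ρ⊗σ)exp(i Δt S)] − (σ − i Δt (ρσ − σρ)) ‖ ≤ 4·Δt². -/

import Mathlib

open Matrix
open scoped Kronecker Matrix.Norms.L2Operator ComplexOrder

/-- The swap operator `S` on `ℂⁿ ⊗ ℂⁿ`, with entries `S[(i,j),(k,l)] = δ_{i,l} δ_{j,k}`. -/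
noncomputable def swapOp (n : ℕ) : Matrix (Fin n × Fin n) (Fin n × Fin n) ℂ :=
  Matrix.of fun p q => if p.1 = q.2 ∧ p.2 = q.1 then 1 else 0

/-- Partial trace over the first tensor factor:
`(Tr₁ M)[j,l] = Σ_i M[(i,j),(i,l)]`. -/
noncomputable def ptrace1 {n : ℕ} (M : Matrix (Fin n × Fin n) (Fin n × Fin n) ℂ) :
    Matrix (Fin n) (Fin n) ℂ :=
  Matrix.of fun j l => ∑ i : Fin n, M (i, j) (i, l)


lemma swapOp_mul_self (n : ℕ) : swapOp n * swapOp n = 1 := by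
  ext ⟨a, b⟩ ⟨c, d⟩
  rw [Matrix.mul_apply, Fintype.sum_prod_type]
  simp only [swapOp, Matrix.of_apply, Matrix.one_apply, Prod.mk.injEq]
  rw [Finset.sum_eq_single b, Finset.sum_eq_single a]
  · simp [and_comm]
  · intro x _ hx
    simp [hx.symm]
  · simp
  · intro x _ hx
    simp [hx.symm]
  · simp

lemma exp_smul_swapOp (n : ℕ) (z : ℂ) : NormedSpace.exp (z • swapOp n) =
    Complex.cosh z • (1 : Matrix (Fin n × Fin n) (Fin n × Fin n) ℂ)
      + Complex.sinh z • swapOp n := by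
  have hE : ∀ k : ℕ, swapOp n ^ (2 * k) = 1 := fun k => by
    rw [pow_mul, pow_two, swapOp_mul_self, one_pow]
  have h1 := NormedSpace.exp_series_hasSum_exp' (𝕂 := ℂ) (z • swapOp n)
  refine h1.unique (HasSum.even_add_odd ?_ ?_)
  · have h := (Complex.hasSum_cosh z).smul_const
      (1 : Matrix (Fin n × Fin n) (Fin n × Fin n) ℂ)
    refine Eq.mp (congrArg (fun f => HasSum f _) (funext fun k => ?_)) h
    rw [smul_pow, hE, smul_smul, div_eq_inv_mul]
  · have h := (Complex.hasSum_sinh z).smul_const (swapOp n)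
    refine Eq.mp (congrArg (fun f => HasSum f _) (funext fun k => ?_)) h
    rw [smul_pow, pow_succ (swapOp n), hE, one_mul, smul_smul, div_eq_inv_mul]

lemma swapOp_mul_apply {n : ℕ} (M : Matrix (Fin n × Fin n) (Fin n × Fin n) ℂ)
    (a b : Fin n) (q : Fin n × Fin n) : (swapOp n * M) (a, b) q = M (b, a) q := by
  rw [Matrix.mul_apply, Finset.sum_eq_single (b, a)]
  · simp [swapOp]
  · rintro ⟨x, y⟩ _ h
    have : ¬ (a = y ∧ b = x) := by
      rintro ⟨rfl, rfl⟩
      exact h rfl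
    simp [swapOp, this]
  · simp

lemma mul_swapOp_apply {n : ℕ} (M : Matrix (Fin n × Fin n) (Fin n × Fin n) ℂ)
    (a b : Fin n) (q : Fin n × Fin n) : (M * swapOp n) q (a, b) = M q (b, a) := by
  rw [Matrix.mul_apply, Finset.sum_eq_single (b, a)]
  · simp [swapOp]
  · rintro ⟨x, y⟩ _ h
    have : ¬ (x = b ∧ y = a) := by
      rintro ⟨rfl, rfl⟩
      exact h rfl
    simp [swapOp, this]
  · simp

lemma density_norm_le_one {n : ℕ} (ρ : Matrix (Fin n) (Fin n) ℂ)
    (hρ : ρ.PosSemidef) (hρtr : ρ.trace = 1) : ‖ρ‖ ≤ 1 := by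
  have hsum : ∑ i, hρ.1.eigenvalues i = 1 := by
    have := hρ.1.trace_eq_sum_eigenvalues
    rw [hρtr] at this
    apply Complex.ofReal_injective
    rw [Complex.ofReal_sum, Complex.ofReal_one]
    exact this.symm
  have hle : ∀ i, hρ.1.eigenvalues i ≤ 1 := fun i => by
    rw [← hsum]
    exact Finset.single_le_sum (fun j _ => hρ.eigenvalues_nonneg j) (Finset.mem_univ i)
  have hd : ‖(diagonal (RCLike.ofReal ∘ hρ.1.eigenvalues) : Matrix (Fin n) (Fin n) ℂ)‖ ≤ 1 := by
    rw [Matrix.l2_opNorm_diagonal]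
    refine (pi_norm_le_iff_of_nonneg zero_le_one).2 fun i => ?_
    simp only [Function.comp]
    rw [RCLike.norm_ofReal, abs_of_nonneg (hρ.eigenvalues_nonneg i)]
    exact hle i
  rw [hρ.1.spectral_theorem, Unitary.conjStarAlgAut_apply]
  have e := CStarRing.norm_mul_coe_unitary
    ((hρ.1.eigenvectorUnitary : Matrix (Fin n) (Fin n) ℂ)
      * diagonal (RCLike.ofReal ∘ hρ.1.eigenvalues)) (star hρ.1.eigenvectorUnitary)
  rw [CStarRing.norm_coe_unitary_mul] at e
  exact e.le.trans hd

lemma ptrace1_formula {n : ℕ} (ρ σ : Matrix (Fin n) (Fin n) ℂ)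
    (hρtr : ρ.trace = 1) (hσtr : σ.trace = 1) (a b : ℂ) :
    ptrace1 ((a • (1 : Matrix (Fin n × Fin n) (Fin n × Fin n) ℂ) + (-b) • swapOp n) * (ρ ⊗ₖ σ)
      * (a • (1 : Matrix (Fin n × Fin n) (Fin n × Fin n) ℂ) + b • swapOp n))
    = (a ^ 2) • σ - (b ^ 2) • ρ - (a * b) • (ρ * σ - σ * ρ) := by
  have key : ∀ M : Matrix (Fin n × Fin n) (Fin n × Fin n) ℂ,
      (a • (1 : Matrix (Fin n × Fin n) (Fin n × Fin n) ℂ) + (-b) • swapOp n) * M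
      * (a • (1 : Matrix (Fin n × Fin n) (Fin n × Fin n) ℂ) + b • swapOp n)
      = (a ^ 2) • M - (b ^ 2) • (swapOp n * M * swapOp n)
        - (a * b) • (swapOp n * M - M * swapOp n) := by
    intro M
    simp only [add_mul, mul_add, smul_mul_assoc, mul_smul_comm, one_mul, mul_one, smul_add,
      smul_sub, smul_smul]
    module
  rw [key]
  ext j l
  simp only [Matrix.trace, Matrix.diag_apply] at hρtr hσtr
  simp only [ptrace1, Matrix.of_apply, Matrix.sub_apply, Matrix.smul_apply, swapOp_mul_apply,
    mul_swapOp_apply, Matrix.kroneckerMap_apply, smul_eq_mul, Finset.sum_sub_distrib,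
    ← Finset.mul_sum, ← Finset.sum_mul, hρtr, hσtr, one_mul, mul_one]
  simp only [Matrix.mul_apply, mul_comm]

lemma real_bounds (t : ℝ) (h0 : 0 < t) (h1 : t ≤ 1) :
    |t - Real.cos t * Real.sin t| ≤ t ^ 2 := by
  have hs := Real.sin_gt_sub_cube h0
  have hc := Real.one_sub_sq_div_two_le_cos (x := t)
  have hsl := Real.sin_lt h0
  have hc1 := Real.cos_le_one t
  have hs0 : 0 ≤ Real.sin t := Real.sin_nonneg_of_nonneg_of_le_pi h0.le (by linarith [Real.pi_gt_three])
  have ht2 : t ^ 2 ≤ 1 := by nlinarith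
  have ht3 : t ^ 3 ≤ t ^ 2 := by nlinarith [sq_nonneg t]
  have hsc : Real.cos t * Real.sin t ≤ Real.sin t := by nlinarith
  have hlow : Real.sin t - t ^ 2 / 2 * Real.sin t ≤ Real.cos t * Real.sin t := by nlinarith
  have : t ^ 2 / 2 * Real.sin t ≤ t ^ 2 / 2 := by nlinarith [sq_nonneg t]
  rw [abs_le]
  constructor
  · nlinarith [sq_nonneg t]
  · nlinarith [hs]

/-- For density matrices `ρ, σ` and `0 < Δt ≤ 1`, in the ℓ²→ℓ² operator norm,
`‖Tr₁[exp(−iΔtS)(ρ⊗σ)exp(iΔtS)] − (σ − iΔt[ρ,σ])‖ ≤ 4·Δt²`. -/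
theorem ptrace1_exp_swap_conj_approx_commutator {n : ℕ} (hn : 1 ≤ n)
    (ρ σ : Matrix (Fin n) (Fin n) ℂ)
    (hρ : ρ.PosSemidef) (hρtr : ρ.trace = 1)
    (hσ : σ.PosSemidef) (hσtr : σ.trace = 1)
    (Δt : ℝ) (hΔt0 : 0 < Δt) (hΔt1 : Δt ≤ 1) :
    ‖ptrace1 (NormedSpace.exp ((-(Complex.I * (Δt : ℂ))) • swapOp n) * (ρ ⊗ₖ σ) *
          NormedSpace.exp ((Complex.I * (Δt : ℂ)) • swapOp n)) -
        (σ - (Complex.I * (Δt : ℂ)) • (ρ * σ - σ * ρ))‖ ≤ 4 * Δt ^ 2 := by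
  rw [exp_smul_swapOp, exp_smul_swapOp, Complex.cosh_neg, Complex.sinh_neg,
    ptrace1_formula ρ σ hρtr hσtr, mul_comm Complex.I, Complex.cosh_mul_I, Complex.sinh_mul_I]
  have hr := density_norm_le_one ρ hρ hρtr
  have hs := density_norm_le_one σ hσ hσtr
  have hcs : Complex.cos (Δt : ℂ) ^ 2 = 1 - Complex.sin (Δt : ℂ) ^ 2 := by
    rw [← Complex.sin_sq_add_cos_sq (Δt : ℂ)]; ring
  have e : Complex.cos (Δt : ℂ) ^ 2 • σ - (Complex.sin (Δt : ℂ) * Complex.I) ^ 2 • ρ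
      - (Complex.cos (Δt : ℂ) * (Complex.sin (Δt : ℂ) * Complex.I)) • (ρ * σ - σ * ρ)
      - (σ - ((Δt : ℂ) * Complex.I) • (ρ * σ - σ * ρ))
      = ((Real.sin Δt ^ 2 : ℝ) : ℂ) • (ρ - σ)
        + (((Δt - Real.cos Δt * Real.sin Δt : ℝ) : ℂ) * Complex.I) • (ρ * σ - σ * ρ) := by
    rw [hcs, mul_pow, Complex.I_sq]
    push_cast
    module
  rw [e]
  have n1 : ‖ρ - σ‖ ≤ 2 := (norm_sub_le _ _).trans (by linarith)
  have n2 : ‖ρ * σ - σ * ρ‖ ≤ 2 := by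
    have h1 : ‖ρ * σ‖ ≤ 1 := (norm_mul_le _ _).trans (mul_le_one₀ hr (norm_nonneg _) hs)
    have h2 : ‖σ * ρ‖ ≤ 1 := (norm_mul_le _ _).trans (mul_le_one₀ hs (norm_nonneg _) hr)
    exact (norm_sub_le _ _).trans (by linarith)
  have b1 : Real.sin Δt ^ 2 ≤ Δt ^ 2 := by
    rw [sq_le_sq]
    exact Real.abs_sin_le_abs
  have b2 := real_bounds Δt hΔt0 hΔt1
  refine (norm_add_le _ _).trans ?_
  rw [norm_smul, norm_smul, norm_mul, Complex.norm_I, Complex.norm_real, Complex.norm_real,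
    Real.norm_eq_abs, Real.norm_eq_abs, mul_one, abs_of_nonneg (sq_nonneg _)]
  have m1 := mul_le_mul b1 n1 (norm_nonneg _) (sq_nonneg _)
  have m2 := mul_le_mul b2 n2 (norm_nonneg _) (sq_nonneg _)
  linarith
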